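/- Let P ∈ F₂[z] with P(0) = 1, let 𝒜(P) be the unique set of positive integers whose partition generating function is congruent to P modulo 2, let q be the odd integer attached to P as the lcm of the orders of its irreducible factors, and let r be the multiplicative order of 2 modulo q. If p is a bad prime (i.e., an odd prime with p ≡ 2^i (mod q) for some 0 ≤ i ≤ r−1), then gcd(p, n) = 1 for every n ∈ 𝒜(P); that is, no element of 𝒜(P) is divisible by a bad prime. -/

import Mathlib

/-!
Let `N(F)(z) = ∏_{ω ^ p = 1} F(ω z)`, a multiplicative map on polynomials over an algebraic closure
of `F₂`.

* `N(P) = P(z ^ p)`: if `P = ∏ (z - r)` then `N(P) = ∏ (z ^ p - r ^ p)` as `p` is odd. Every root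
  `r` satisfies `r ^ q = 1`, so `r ^ p = r ^ (2 ^ i)` for a bad prime `p`, and the `i`-th power of
  the Frobenius permutes the roots of `P` (`rootNorm_map_eq_expand`).
* `N(1 - z ^ a)` is `1 - z ^ (a p)` if `p ∤ a` and `(1 - z ^ a) ^ p` if `p ∣ a`
  (`rootNorm_one_sub_X_pow`, `rootNorm_one_sub_X_pow_of_dvd`).

Suppose that `a` is the least element of `A` divisible by `p`. Euler's product gives
`P · D ≡ 1 (mod z ^ (a + 1))` with `D = D₁ · (1 - z ^ a)`, where `D₁` is the product of the
`1 - z ^ b` over the `b ∈ A` with `b < a`, none of them divisible by `p`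
(`X_pow_dvd_mul_prod_sub_one`). Applying `N` on the one hand and `z ↦ z ^ p` on the other, one finds
`P(z ^ p) D₁(z ^ p) (1 - z ^ a) ^ p ≡ 1 ≡ P(z ^ p) D₁(z ^ p) (1 - z ^ (a p))`, so
`(1 - z ^ a) ^ p ≡ 1 (mod z ^ (a + 1))`. This forces `p = 0` in `F₂`, which is absurd for odd `p`.
-/

open Polynomial

/-- Number of partitions of `n` with all parts in `A` (this is `1` for `n = 0`). -/
noncomputable def partitionCount (A : Set ℕ) (n : ℕ) : ℕ :=
  Nat.card {p : n.Partition // ∀ i ∈ p.parts, i ∈ A}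

/-- The odd integer `q = q(P)` attached to `P`: the lcm of the orders of the irreducible
factors of `P`, characterized as the least `m > 0` such that every irreducible factor of `P`
divides `X ^ m - 1` over `F₂`. -/
noncomputable def qOf (P : Polynomial (ZMod 2)) : ℕ :=
  sInf {m | 0 < m ∧ ∀ Q : Polynomial (ZMod 2), Irreducible Q → Q ∣ P → Q ∣ X ^ m - 1}

/-- Euler's product modulo `2`, truncated at degree `n`: only parts at most `n` matter below degree
`n + 1`, so there the finite product is the inverse of the generating function `P`. -/
theorem X_pow_dvd_mul_prod_sub_one (P : (ZMod 2)[X]) (A : Set ℕ) [DecidablePred (· ∈ A)]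
    (hA : ∀ n : ℕ, (partitionCount A n : ZMod 2) = P.coeff n) (n : ℕ) :
    (X : (ZMod 2)[X]) ^ (n + 1) ∣
      P * (∏ i ∈ Finset.range n, if i + 1 ∈ A then 1 - X ^ (i + 1) else 1) - 1 := by
  classical
  let _ : TopologicalSpace (ZMod 2) := ⊥
  have _ : DiscreteTopology (ZMod 2) := ⟨rfl⟩
  open scoped PowerSeries.WithPiTopology in
  have h1 := Nat.Partition.hasProd_powerSeriesMk_card_restricted (ZMod 2)
    (fun i => i ∈ A ∧ i ≤ n)
  set F : PowerSeries (ZMod 2) := PowerSeries.mk fun k =>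
    ((Nat.Partition.restricted k (fun i => i ∈ A ∧ i ≤ n)).card : ZMod 2) with hF
  open scoped PowerSeries.WithPiTopology in
  have h2 : F = ∏ i ∈ Finset.range n, (if i + 1 ∈ A then
      ∑' j : ℕ, (PowerSeries.X : PowerSeries (ZMod 2)) ^ ((i + 1) * j) else 1) := by
    refine (h1.unique (hasProd_prod_of_ne_finset_one (s := Finset.range n) ?_)).trans ?_
    · intro i hi
      rw [if_neg]
      simp only [Finset.mem_range] at hi
      omega
    · refine Finset.prod_congr rfl fun i hi => ?_
      have : i + 1 ≤ n := by simpa [Nat.succ_le_iff] using hi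
      simp [this]
  have h3 : F * ((∏ i ∈ Finset.range n, if i + 1 ∈ A then 1 - X ^ (i + 1) else 1 :
      (ZMod 2)[X]) : PowerSeries (ZMod 2)) = 1 := by
    rw [h2, ← Polynomial.coeToPowerSeries.ringHom_apply, map_prod, ← Finset.prod_mul_distrib]
    refine Finset.prod_eq_one fun i _ => ?_
    split_ifs
    · simp_rw [pow_mul]
      have := PowerSeries.WithPiTopology.tsum_pow_mul_one_sub_of_constantCoeff_eq_zero
        (f := (PowerSeries.X : PowerSeries (ZMod 2)) ^ (i + 1)) (by simp)
      simpa using this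
    · simp
  have h4 : (PowerSeries.X : PowerSeries (ZMod 2)) ^ (n + 1) ∣ (P : PowerSeries (ZMod 2)) - F := by
    rw [PowerSeries.X_pow_dvd_iff]
    intro m hm
    rw [map_sub, Polynomial.coeff_coe, ← hA m, hF, PowerSeries.coeff_mk, sub_eq_zero]
    congr 1
    rw [partitionCount, Nat.card_eq_fintype_card, Fintype.card_subtype, Nat.Partition.restricted]
    congr 1
    refine Finset.filter_congr fun x _ => forall₂_congr fun i hi => ?_
    have : i ≤ m := x.parts_sum ▸ Multiset.le_sum_of_mem hi
    exact ⟨fun h => ⟨h, by omega⟩, fun h => h.1⟩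
  have h5 := h4.mul_right ((∏ i ∈ Finset.range n, if i + 1 ∈ A then 1 - X ^ (i + 1) else 1 :
      (ZMod 2)[X]) : PowerSeries (ZMod 2))
  rw [sub_mul, h3, PowerSeries.X_pow_dvd_iff] at h5
  rw [Polynomial.X_pow_dvd_iff]
  intro d hd
  have := h5 d hd
  rw [← Polynomial.coe_mul, ← Polynomial.coe_one, ← Polynomial.coe_sub,
    Polynomial.coeff_coe] at this
  exact this

/-- The map `F(z) ↦ ∏_{ω ^ p = 1} F(ω z)`. The roots of unity `ω` are taken in `K[X]` rather than
in `K`, which changes nothing since they are constant. -/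
noncomputable def rootNorm (K : Type*) [Field K] (p : ℕ) : K[X] →* K[X] :=
  ∏ ω ∈ nthRootsFinset p (1 : K[X]), (compRingHom (ω * X) : K[X] →* K[X])

section RootNorm

variable {K : Type*} [Field K] {p : ℕ}

theorem rootNorm_apply (F : K[X]) :
    rootNorm K p F = ∏ ω ∈ nthRootsFinset p (1 : K[X]), F.comp (ω * X) := by
  simp [rootNorm, MonoidHom.finsetProd_apply]

theorem rootNorm_X_sub_C {ζ : K[X]} (hζ : IsPrimitiveRoot ζ p) (hp : Odd p) (r : K) :
    rootNorm K p (X - C r) = X ^ p - C (r ^ p) := by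
  have h := hζ.pow_sub_pow_eq_prod_sub_mul (C r) X hp.pos
  rw [rootNorm_apply, C_pow, ← neg_sub (C r ^ p), h, ← neg_one_mul, ← hp.neg_one_pow,
    ← Finset.prod_congr rfl (fun ω _ => neg_sub (ω * X) (C r)), Finset.prod_neg,
    hζ.card_nthRootsFinset, ← mul_assoc, ← mul_pow]
  simp

theorem rootNorm_one_sub_X_pow_of_dvd {ζ : K[X]} (hζ : IsPrimitiveRoot ζ p) (hp : 0 < p) {a : ℕ}
    (ha : p ∣ a) : rootNorm K p (1 - X ^ a) = (1 - X ^ a) ^ p := by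
  rw [rootNorm_apply, ← hζ.card_nthRootsFinset, ← Finset.prod_const, hζ.card_nthRootsFinset]
  refine Finset.prod_congr rfl fun ω hω => ?_
  obtain ⟨c, rfl⟩ := ha
  rw [mem_nthRootsFinset hp] at hω
  simp [mul_pow, pow_mul, hω]

theorem rootNorm_one_sub_X_pow {ζ : K[X]} (hζ : IsPrimitiveRoot ζ p) (hp : 1 < p) {a : ℕ}
    (ha : a.Coprime p) : rootNorm K p (1 - X ^ a) = expand K p (1 - X ^ a) := by
  have h := hζ.pow_sub_pow_eq_prod_sub_mul 1 (X ^ a) (by omega)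
  obtain ⟨b, hb⟩ := Nat.exists_mul_mod_eq_one_of_coprime ha hp
  have hab : a * b ≡ 1 [MOD p] := by rw [Nat.ModEq, hb.2, Nat.mod_eq_of_lt hp]
  have key : ∀ ω ∈ nthRootsFinset p (1 : K[X]), ω ^ (a * b) = ω := fun ω hω => by
    rw [mem_nthRootsFinset (by omega)] at hω
    simpa using pow_eq_pow_of_modEq hab hω
  have hmem : ∀ c : ℕ, ∀ ω ∈ nthRootsFinset p (1 : K[X]), ω ^ c ∈ nthRootsFinset p (1 : K[X]) :=
    fun c ω hω => by
      rw [mem_nthRootsFinset (by omega)] at hω ⊢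
      rw [← pow_mul, mul_comm, pow_mul, hω, one_pow]
  rw [rootNorm_apply, map_sub, map_one, map_pow, expand_X, ← pow_mul, mul_comm, pow_mul,
    ← one_pow p, h, one_pow]
  -- `ω ↦ ω ^ a` permutes the `p`-th roots of unity
  refine Finset.prod_nbij' (· ^ a) (· ^ b) (hmem a) (hmem b) ?_ ?_ ?_
  · intro ω hω
    simp only [← pow_mul]
    exact key ω hω
  · intro ω hω
    simp only [← pow_mul]
    rw [mul_comm b a]
    exact key ω hω
  · intro ω _
    simp [mul_pow]

theorem X_pow_dvd_rootNorm_sub_one {F : K[X]} {n : ℕ} (h : X ^ n ∣ F - 1) :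
    X ^ n ∣ rootNorm K p F - 1 := by
  rw [rootNorm_apply]
  refine Finset.prod_induction (fun ω => F.comp (ω * X)) (fun G => X ^ n ∣ G - 1) ?_ (by simp) ?_
  · intro a b ha hb
    have : a * b - 1 = (a - 1) * b + (b - 1) := by ring
    rw [this]
    exact dvd_add (ha.mul_right _) hb
  · intro ω _
    obtain ⟨E, hE⟩ := h
    rw [sub_eq_iff_eq_add] at hE
    rw [hE]
    simp only [add_comp, mul_comp, pow_comp, X_comp, one_comp, add_sub_cancel_right, mul_pow]
    exact ((dvd_mul_left _ _).mul_right _)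

end RootNorm

/-- When `q(P)` is not the junk value `0`, every root of `P` is a `q(P)`-th root of unity. -/
theorem root_pow_qOf {K : Type*} [Field K] [Algebra (ZMod 2) K] [Algebra.IsAlgebraic (ZMod 2) K]
    {P : (ZMod 2)[X]} (hq : qOf P ≠ 0) {r : K} (hr : aeval r P = 0) : r ^ qOf P = 1 := by
  have hmem : qOf P ∈ {m | 0 < m ∧ ∀ Q : Polynomial (ZMod 2), Irreducible Q → Q ∣ P →
      Q ∣ X ^ m - 1} :=
    Nat.sInf_mem (Nat.nonempty_of_pos_sInf (Nat.pos_of_ne_zero hq))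
  have hint : IsIntegral (ZMod 2) r := Algebra.IsIntegral.isIntegral r
  obtain ⟨E, hE⟩ := hmem.2 _ (minpoly.irreducible hint) (minpoly.dvd _ _ hr)
  have := congrArg (aeval r) hE
  simpa [sub_eq_zero] using this

/-- If `r ^ p = r ^ (2 ^ i)` for every root `r` of `P`, then `∏_{ω ^ p = 1} P(ω z) = P(z ^ p)`,
because `r ↦ r ^ (2 ^ i)` is an automorphism fixing the coefficients of `P`. -/
theorem rootNorm_map_eq_expand {K : Type*} [Field K] [Algebra (ZMod 2) K] [IsAlgClosed K]
    {P : (ZMod 2)[X]} (hP : P ≠ 0) {p i : ℕ} {ζ : K[X]} (hζ : IsPrimitiveRoot ζ p) (hp : Odd p)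
    (hroots : ∀ r : K, aeval r P = 0 → r ^ p = r ^ 2 ^ i) :
    rootNorm K p (P.map (algebraMap (ZMod 2) K)) = expand K p (P.map (algebraMap (ZMod 2) K)) := by
  have : CharP K 2 := charP_of_injective_algebraMap (algebraMap (ZMod 2) K).injective 2
  have hmonic : P.Monic := by
    have h0 : P.leadingCoeff ≠ 0 := leadingCoeff_ne_zero.mpr hP
    have : ∀ x : ZMod 2, x ≠ 0 → x = 1 := by decide
    exact this _ h0
  set Q := P.map (algebraMap (ZMod 2) K) with hQ
  have hprod := (IsAlgClosed.splits Q).eq_prod_roots_of_monic (hmonic.map _)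
  have hfrob : Q = (Q.roots.map fun r => X - C (r ^ 2 ^ i)).prod := by
    have h1 : Q.map (iterateFrobenius K 2 i) = Q := by
      rw [hQ, Polynomial.map_map]
      congr 1
      exact Subsingleton.elim _ _
    conv_lhs => rw [← h1, hprod]
    rw [Polynomial.map_multiset_prod, Multiset.map_map]
    simp [iterateFrobenius_def]
  conv_lhs => rw [hprod]
  conv_rhs => rw [hfrob]
  rw [map_multiset_prod, map_multiset_prod, Multiset.map_map, Multiset.map_map]
  congr 1
  refine Multiset.map_congr rfl fun r hr => ?_
  have hr' : aeval r P = 0 := by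
    have := isRoot_of_mem_roots hr
    rwa [IsRoot, hQ, eval_map_algebraMap] at this
  simp [rootNorm_X_sub_C hζ hp, hroots r hr', -map_pow]

/-- If `p` is a bad prime (an odd prime congruent to a power of `2` modulo `q(P)`),
then `gcd(p, n) = 1` for every `n ∈ 𝒜(P)`. -/
theorem stmt0 (P : Polynomial (ZMod 2)) (hP : P.coeff 0 = 1)
    (A : Set ℕ) (hApos : ∀ a ∈ A, 0 < a)
    (hA : ∀ n : ℕ, (partitionCount A n : ZMod 2) = P.coeff n)
    (p : ℕ) (hp : p.Prime) (hp2 : p ≠ 2)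
    (hbad : ∃ i < orderOf (2 : ZMod (qOf P)), (p : ZMod (qOf P)) = 2 ^ i) :
    ∀ n ∈ A, Nat.gcd p n = 1 := by
  classical
  have hP0 : P ≠ 0 := by
    rintro rfl
    simp at hP
  have hodd : Odd p := hp.odd_of_ne_two hp2
  obtain ⟨i, hi, hpi⟩ := hbad
  -- `q = 0` would give the equation `p = 2 ^ i` in `ZMod 0 = ℤ`, impossible for an odd prime
  have hq : qOf P ≠ 0 := by
    intro hq
    rw [hq] at hpi
    have h : p = 2 ^ i := by
      have h' : ((p : ℕ) : ZMod 0) = ((2 ^ i : ℕ) : ZMod 0) := by rw [hpi]; push_cast; rfl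
      exact Nat.cast_injective h'
    rcases Nat.eq_zero_or_pos i with rfl | h0
    · exact hp.one_lt.ne' (by simpa using h)
    · rw [h] at hodd
      exact (Nat.not_odd_iff_even.mpr ((even_two).pow_of_ne_zero h0.ne')) hodd
  have hmod : p ≡ 2 ^ i [MOD qOf P] := by
    rw [← ZMod.natCast_eq_natCast_iff, hpi]
    push_cast
    rfl
  let K := AlgebraicClosure (ZMod 2)
  have : CharP K 2 := charP_of_injective_algebraMap (algebraMap (ZMod 2) K).injective 2
  have hpK : (p : K) ≠ 0 := by
    rw [Ne, CharP.cast_eq_zero_iff K 2]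
    exact hodd.not_two_dvd_nat
  have : NeZero (p : K) := ⟨hpK⟩
  obtain ⟨ζ₀, hζ₀⟩ := HasEnoughRootsOfUnity.exists_primitiveRoot K p
  have hζ : IsPrimitiveRoot (C ζ₀) p := hζ₀.map_of_injective C_injective
  have hNP := rootNorm_map_eq_expand (K := K) hP0 hζ hodd (i := i)
    fun r hr => pow_eq_pow_of_modEq hmod (root_pow_qOf hq hr)
  by_contra! hcon
  have hex : ∃ a, a ∈ A ∧ p ∣ a := by
    obtain ⟨n, hn, hg⟩ := hcon
    exact ⟨n, hn, by_contra fun h => hg ((Nat.Prime.coprime_iff_not_dvd hp).mpr h)⟩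
  -- from here on `a = m + 1` is the least element of `A` divisible by `p`
  obtain ⟨haA, hpa⟩ := Nat.find_spec hex
  have hmin : ∀ b < Nat.find hex, b ∈ A → ¬ p ∣ b :=
    fun b hb hbA h => Nat.find_min hex hb ⟨hbA, h⟩
  obtain ⟨m, hm⟩ := Nat.exists_eq_succ_of_ne_zero (hApos _ haA).ne'
  generalize Nat.find hex = a at *
  subst hm
  rw [Nat.succ_eq_add_one] at *
  have hPD := X_pow_dvd_mul_prod_sub_one P A hA (m + 1)
  rw [Finset.prod_range_succ, if_pos haA] at hPD
  set D₁ : (ZMod 2)[X] := ∏ i ∈ Finset.range m, if i + 1 ∈ A then 1 - X ^ (i + 1) else 1 with hD₁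
  have hPDK := map_dvd (mapRingHom (algebraMap (ZMod 2) K)) hPD
  simp only [map_sub, map_mul, map_pow, map_one, coe_mapRingHom, map_X] at hPDK
  have hND : rootNorm K p (D₁.map (algebraMap (ZMod 2) K)) =
      expand K p (D₁.map (algebraMap (ZMod 2) K)) := by
    rw [hD₁, Polynomial.map_prod, map_prod, map_prod]
    refine Finset.prod_congr rfl fun j hj => ?_
    split_ifs with hjA
    · have hj' : j + 1 < m + 1 := by simpa using hj
      have := rootNorm_one_sub_X_pow hζ hp.one_lt
        ((Nat.Prime.coprime_iff_not_dvd hp).mpr (hmin _ hj' hjA)).symm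
      simpa using this
    · simp
  have hN := X_pow_dvd_rootNorm_sub_one (p := p) hPDK
  rw [map_mul, map_mul, hNP, hND, rootNorm_one_sub_X_pow_of_dvd hζ hp.pos hpa] at hN
  have hE : (X : K[X]) ^ (m + 1 + 1) ∣ _ := (pow_dvd_pow_of_dvd
    (dvd_pow_self X hp.ne_zero) (m + 1 + 1)).trans (by simpa using map_dvd (expand K p) hPDK)
  set U := expand K p (P.map (algebraMap (ZMod 2) K)) with hU
  set V := expand K p (D₁.map (algebraMap (ZMod 2) K)) with hV
  -- `a p ≥ a + 1`, so the factor `1 - z ^ (a p)` is `1` modulo `z ^ (a + 1)`, where `a = m + 1`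
  have hX : (X : K[X]) ^ (m + 1 + 1) ∣ (X ^ p) ^ (m + 1) := by
    rw [← pow_mul]
    refine pow_dvd_pow _ ?_
    have := hp.two_le
    nlinarith
  -- modulo `z ^ (a + 1)`, only the first two terms of `(1 - z ^ a) ^ p` survive
  obtain ⟨k, hk⟩ := powAddExpansion (1 : K[X]) (-X ^ (m + 1)) p
  rw [← sub_eq_add_neg] at hk
  have hX2 : (X : K[X]) ^ (m + 1 + 1) ∣ (X ^ (m + 1)) ^ 2 := by
    rw [← pow_mul]
    exact pow_dvd_pow _ (by omega)
  have hfin : (X : K[X]) ^ (m + 1 + 1) ∣ (p : K[X]) * X ^ (m + 1) := by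
    rw [hk] at hN
    have hUV : (X : K[X]) ^ (m + 1 + 1) ∣ U * V - 1 := by
      have := dvd_add hE (hX.mul_left (U * V))
      ring_nf at this ⊢
      exact this
    have h1 := dvd_sub (hUV.mul_right (1 - (p : K[X]) * X ^ (m + 1))) hN
    have h2 := dvd_add h1 (hX2.mul_left (U * V * k))
    convert h2 using 1
    simp only [one_pow]
    ring
  rw [← C_eq_natCast, X_pow_dvd_iff] at hfin
  have := hfin (m + 1) (by omega)
  rw [coeff_C_mul, coeff_X_pow_self, mul_one] at this
  exact hpK this
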